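/- arXiv:1401.7698 — 2 statements merged into one kernel-verified Lean document; each statement's English description precedes it below -/
import Mathlib

section
/- Let A, V, B̌ : ℝ × ℝ³ → ℝ³ and φ : ℝ × ℝ³ → ℝ be smooth, and suppose there is a compact set K ⊆ ℝ³ such that A(t,·) and B̌(t,·) vanish outside K for every t. Assume for all (t,x): ∂ₜA = V×(∇×A) − ∇φ, ∂ₜB̌ = ∇×(V×B̌), and ∇·B̌ = 0. Then the cross helicity t ↦ ∫_{ℝ³} A(t,x)·B̌(t,x) dx is constant in t. -/
open MeasureTheory

/-- `i`-th spatial partial derivative of a scalar field on ℝ³. -/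
noncomputable def pd3 (i : Fin 3) (f : (Fin 3 → ℝ) → ℝ) (x : Fin 3 → ℝ) : ℝ :=
  fderiv ℝ f x (Pi.single i 1)

/-- Gradient of a scalar field on ℝ³. -/
noncomputable def grad3 (f : (Fin 3 → ℝ) → ℝ) (x : Fin 3 → ℝ) : Fin 3 → ℝ :=
  fun i => pd3 i f x

/-- Divergence of a vector field on ℝ³. -/
noncomputable def div3 (F : (Fin 3 → ℝ) → (Fin 3 → ℝ)) (x : Fin 3 → ℝ) : ℝ :=
  ∑ i, pd3 i (fun y => F y i) x

/-- Curl of a vector field on ℝ³. -/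
noncomputable def curl3 (F : (Fin 3 → ℝ) → (Fin 3 → ℝ)) (x : Fin 3 → ℝ) : Fin 3 → ℝ :=
  ![pd3 1 (fun y => F y 2) x - pd3 2 (fun y => F y 1) x,
    pd3 2 (fun y => F y 0) x - pd3 0 (fun y => F y 2) x,
    pd3 0 (fun y => F y 1) x - pd3 1 (fun y => F y 0) x]

/-- Cross product on ℝ³. -/
def cross3 (a b : Fin 3 → ℝ) : Fin 3 → ℝ :=
  ![a 1 * b 2 - a 2 * b 1, a 2 * b 0 - a 0 * b 2, a 0 * b 1 - a 1 * b 0]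

/-- Euclidean dot product on ℝ³. -/
def dot3 (a b : Fin 3 → ℝ) : ℝ := ∑ i, a i * b i

theorem aux_integral_pd3 (i : Fin 3) (f : (Fin 3 → ℝ) → ℝ) (hf : ContDiff ℝ 1 f)
    (hc : HasCompactSupport f) : ∫ x, pd3 i f x = 0 := by
  have hcont : Continuous (fun x => fderiv ℝ f x (Pi.single i 1)) :=
    (hf.continuous_fderiv one_ne_zero).clm_apply continuous_const
  have hc' : HasCompactSupport (fun x => fderiv ℝ f x (Pi.single i 1)) :=
    hc.fderiv_apply ℝ _
  have h := integral_mul_fderiv_eq_neg_fderiv_mul_of_integrable (μ := (volume : Measure (Fin 3 → ℝ)))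
    (f := fun _ : Fin 3 → ℝ => (1 : ℝ)) (g := f) (v := Pi.single i 1) (by simp)
    (by simpa using hcont.integrable_of_hasCompactSupport hc')
    (by simpa using hf.continuous.integrable_of_hasCompactSupport hc)
    (by simp) (fun x _ => (hf.differentiable one_ne_zero) x)
  simpa [pd3] using h

theorem aux_integrable_pd3 (i : Fin 3) (f : (Fin 3 → ℝ) → ℝ) (hf : ContDiff ℝ 1 f)
    (hc : HasCompactSupport f) : Integrable (pd3 i f) := by
  have hcont : Continuous (fun x => fderiv ℝ f x (Pi.single i 1)) :=
    (hf.continuous_fderiv one_ne_zero).clm_apply continuous_const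
  exact hcont.integrable_of_hasCompactSupport (hc.fderiv_apply ℝ _)

theorem aux_hasDerivAt (f : ℝ → (Fin 3 → ℝ) → ℝ)
    (hf : ContDiff ℝ 1 (fun p : ℝ × (Fin 3 → ℝ) => f p.1 p.2))
    (K : Set (Fin 3 → ℝ)) (hK : IsCompact K) (h0 : ∀ t x, x ∉ K → f t x = 0) (t : ℝ) :
    HasDerivAt (fun τ => ∫ x, f τ x) (∫ x, deriv (fun τ => f τ x) t) t := by
  set g : ℝ × (Fin 3 → ℝ) → ℝ := fun p => f p.1 p.2 with hg
  have hder : ∀ τ x, HasDerivAt (fun s => f s x) (fderiv ℝ g (τ, x) (1, 0)) τ := by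
    intro τ x
    have h1 := ((hf.differentiable one_ne_zero) (τ, x)).hasFDerivAt
    have h2 : HasDerivAt (fun s : ℝ => (s, x)) ((1 : ℝ), (0 : Fin 3 → ℝ)) τ :=
      (hasDerivAt_id τ).prodMk (hasDerivAt_const τ x)
    exact h1.comp_hasDerivAt τ h2
  have hcont : Continuous (fun p => fderiv ℝ g p (1, 0)) :=
    (hf.continuous_fderiv one_ne_zero).clm_apply continuous_const
  have hsl : ∀ τ, Continuous (f τ) := fun τ =>
    hf.continuous.comp (Continuous.prodMk continuous_const continuous_id)
  obtain ⟨C, hC⟩ := ((isCompact_Icc (a := t - 1) (b := t + 1)).prod hK).exists_bound_of_continuousOn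
    hcont.continuousOn
  have hs : Set.Icc (t - 1) (t + 1) ∈ nhds t := Icc_mem_nhds (by linarith) (by linarith)
  have key := hasDerivAt_integral_of_dominated_loc_of_deriv_le
    (μ := (volume : Measure (Fin 3 → ℝ))) (F := f) (x₀ := t)
    (F' := fun τ x => deriv (fun s => f s x) τ) (bound := K.indicator fun _ => C) hs
    (Filter.Eventually.of_forall fun τ => (hsl τ).aestronglyMeasurable)
    ((hsl t).integrable_of_hasCompactSupport (HasCompactSupport.intro hK (h0 t)))
    (by
      have : (fun x => deriv (fun s => f s x) t) = fun x => fderiv ℝ g (t, x) (1, 0) := by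
        funext x; exact (hder t x).deriv
      rw [this]
      exact (hcont.comp (Continuous.prodMk continuous_const continuous_id)).aestronglyMeasurable)
    (Filter.Eventually.of_forall fun x τ hτ => by
      by_cases hx : x ∈ K
      · rw [(hder τ x).deriv, Set.indicator_of_mem hx]
        exact hC (τ, x) ⟨hτ, hx⟩
      · have : (fun s => f s x) = fun _ => 0 := by funext s; exact h0 s x hx
        simp [this, hx])
    ((integrable_indicator_iff hK.measurableSet).2
      (integrableOn_const hK.measure_lt_top.ne))
    (Filter.Eventually.of_forall fun x τ _ => (hder τ x).differentiableAt.hasDerivAt)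
  exact key.2

theorem aux_pd3_mul (i : Fin 3) (f g : (Fin 3 → ℝ) → ℝ) (x : Fin 3 → ℝ)
    (hf : DifferentiableAt ℝ f x) (hg : DifferentiableAt ℝ g x) :
    pd3 i (fun y => f y * g y) x = f x * pd3 i g x + g x * pd3 i f x := by
  unfold pd3
  rw [fderiv_fun_mul hf hg]; simp

theorem aux_pd3_sub (i : Fin 3) (f g : (Fin 3 → ℝ) → ℝ) (x : Fin 3 → ℝ)
    (hf : DifferentiableAt ℝ f x) (hg : DifferentiableAt ℝ g x) :
    pd3 i (fun y => f y - g y) x = pd3 i f x - pd3 i g x := by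
  unfold pd3
  rw [fderiv_fun_sub hf hg]; simp

theorem aux_identity (A V B : (Fin 3 → ℝ) → (Fin 3 → ℝ)) (φ : (Fin 3 → ℝ) → ℝ)
    (hA : Differentiable ℝ A) (hV : Differentiable ℝ V) (hB : Differentiable ℝ B)
    (hφ : Differentiable ℝ φ) (hdiv : ∀ x, div3 B x = 0) (x : Fin 3 → ℝ) :
    dot3 (cross3 (V x) (curl3 A x) - grad3 φ x) (B x)
      + dot3 (A x) (curl3 (fun y => cross3 (V y) (B y)) x)
    = div3 (fun y => cross3 (cross3 (V y) (B y)) (A y) - φ y • B y) x := by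
  have a : ∀ i, DifferentiableAt ℝ (fun y => A y i) x := fun i => differentiableAt_pi.1 (hA x) i
  have v : ∀ i, DifferentiableAt ℝ (fun y => V y i) x := fun i => differentiableAt_pi.1 (hV x) i
  have b : ∀ i, DifferentiableAt ℝ (fun y => B y i) x := fun i => differentiableAt_pi.1 (hB x) i
  have p := hφ x
  have vb : ∀ i j, DifferentiableAt ℝ (fun y => V y i * B y j) x := fun i j => (v i).mul (b j)
  have w : ∀ i j k l, DifferentiableAt ℝ (fun y => V y i * B y j - V y k * B y l) x :=
    fun i j k l => (vb i j).sub (vb k l)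
  have wa : ∀ i j k l m, DifferentiableAt ℝ (fun y => (V y i * B y j - V y k * B y l) * A y m) x :=
    fun i j k l m => (w i j k l).mul (a m)
  have waa : ∀ i j k l m i' j' k' l' m', DifferentiableAt ℝ (fun y =>
      (V y i * B y j - V y k * B y l) * A y m - (V y i' * B y j' - V y k' * B y l') * A y m') x :=
    fun i j k l m i' j' k' l' m' => (wa i j k l m).sub (wa i' j' k' l' m')
  have pb : ∀ i, DifferentiableAt ℝ (fun y => φ y * B y i) x := fun i => p.mul (b i)
  have hd := hdiv x
  simp only [div3, Fin.sum_univ_three] at hd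
  simp only [div3, dot3, curl3, grad3, cross3, Fin.sum_univ_three, Pi.sub_apply, Pi.smul_apply,
    smul_eq_mul, Matrix.cons_val]
  simp only [aux_pd3_sub _ _ _ _ (waa _ _ _ _ _ _ _ _ _ _) (pb _),
    aux_pd3_sub _ _ _ _ (wa _ _ _ _ _) (wa _ _ _ _ _),
    aux_pd3_mul _ _ _ _ (w _ _ _ _) (a _), aux_pd3_sub _ _ _ _ (vb _ _) (vb _ _),
    aux_pd3_mul _ _ _ _ (v _) (b _), aux_pd3_mul _ _ _ _ p (b _)]
  linear_combination (φ x) * hd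

/-- Conservation of the cross helicity `∫ A·B̌` coupling the vector potential
`A` (with `∂ₜA = V×(∇×A) − ∇φ`) and a divergence-free mock field `B̌` Lie-dragged by the
same flow (`∂ₜB̌ = ∇×(V×B̌)`). -/
theorem mock_cross_helicity_constant
    (A V Bm : ℝ → (Fin 3 → ℝ) → (Fin 3 → ℝ))
    (φ : ℝ → (Fin 3 → ℝ) → ℝ)
    (hA : ContDiff ℝ (⊤ : ℕ∞) (fun p : ℝ × (Fin 3 → ℝ) => A p.1 p.2))
    (hV : ContDiff ℝ (⊤ : ℕ∞) (fun p : ℝ × (Fin 3 → ℝ) => V p.1 p.2))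
    (hBm : ContDiff ℝ (⊤ : ℕ∞) (fun p : ℝ × (Fin 3 → ℝ) => Bm p.1 p.2))
    (hφ : ContDiff ℝ (⊤ : ℕ∞) (fun p : ℝ × (Fin 3 → ℝ) => φ p.1 p.2))
    (K : Set (Fin 3 → ℝ)) (hK : IsCompact K)
    (hAsupp : ∀ t x, x ∉ K → A t x = 0)
    (hBmsupp : ∀ t x, x ∉ K → Bm t x = 0)
    (hindA : ∀ t x, deriv (fun τ => A τ x) t =
      cross3 (V t x) (curl3 (A t) x) - grad3 (φ t) x)
    (hindBm : ∀ t x, deriv (fun τ => Bm τ x) t =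
      curl3 (fun y => cross3 (V t y) (Bm t y)) x)
    (hdivBm : ∀ t x, div3 (Bm t) x = 0) :
    ∀ t₁ t₂ : ℝ,
      (∫ x : Fin 3 → ℝ, dot3 (A t₁ x) (Bm t₁ x)) =
        ∫ x : Fin 3 → ℝ, dot3 (A t₂ x) (Bm t₂ x) := by
  have hA1 := hA.of_le (m := 1) (by exact_mod_cast le_top)
  have hV1 := hV.of_le (m := 1) (by exact_mod_cast le_top)
  have hB1 := hBm.of_le (m := 1) (by exact_mod_cast le_top)
  have hp1 := hφ.of_le (m := 1) (by exact_mod_cast le_top)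
  have hsl : ∀ t : ℝ, ContDiff ℝ 1 (fun x : Fin 3 → ℝ => (t, x)) := fun t => by fun_prop
  have hzero : ∀ t, HasDerivAt (fun τ => ∫ x, dot3 (A τ x) (Bm τ x)) 0 t := by
    intro t
    have hdot : ContDiff ℝ 1 (fun p : ℝ × (Fin 3 → ℝ) => dot3 (A p.1 p.2) (Bm p.1 p.2)) := by
      unfold dot3
      exact ContDiff.sum fun i _ => (contDiff_pi.1 hA1 i).mul (contDiff_pi.1 hB1 i)
    have h := aux_hasDerivAt (fun t x => dot3 (A t x) (Bm t x)) hdot K hK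
      (fun t x hx => by simp [dot3, hAsupp t x hx]) t
    have a : ContDiff ℝ 1 (A t) := hA1.comp (hsl t)
    have v : ContDiff ℝ 1 (V t) := hV1.comp (hsl t)
    have b : ContDiff ℝ 1 (Bm t) := hB1.comp (hsl t)
    have p : ContDiff ℝ 1 (φ t) := hp1.comp (hsl t)
    have hd : ∀ x, deriv (fun τ => dot3 (A τ x) (Bm τ x)) t =
        div3 (fun y => cross3 (cross3 (V t y) (Bm t y)) (A t y) - φ t y • Bm t y) x := by
      intro x
      rw [← aux_identity (A t) (V t) (Bm t) (φ t) (a.differentiable one_ne_zero)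
        (v.differentiable one_ne_zero) (b.differentiable one_ne_zero)
        (p.differentiable one_ne_zero) (hdivBm t) x, ← hindA, ← hindBm]
      have hs : ContDiff ℝ 1 (fun τ : ℝ => (τ, x)) := by fun_prop
      have dA : HasDerivAt (fun τ => A τ x) (deriv (fun τ => A τ x) t) t :=
        (((hA1.comp hs).differentiable one_ne_zero) t).hasDerivAt
      have dB : HasDerivAt (fun τ => Bm τ x) (deriv (fun τ => Bm τ x) t) t :=
        (((hB1.comp hs).differentiable one_ne_zero) t).hasDerivAt
      have := HasDerivAt.fun_sum (u := Finset.univ) fun i _ =>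
        (hasDerivAt_pi.1 dA i).fun_mul (hasDerivAt_pi.1 dB i)
      unfold dot3
      rw [this.deriv, Finset.sum_add_distrib]
    have hG : ContDiff ℝ 1
        (fun y => cross3 (cross3 (V t y) (Bm t y)) (A t y) - φ t y • Bm t y) := by
      have a' := contDiff_pi.1 a
      have v' := contDiff_pi.1 v
      have b' := contDiff_pi.1 b
      refine ContDiff.sub ?_ (p.smul b)
      rw [contDiff_pi]
      intro i
      fin_cases i <;> simp only [cross3, Fin.zero_eta, Fin.mk_one, Fin.reduceFinMk, Matrix.cons_val] <;> fun_prop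
    have hGi := contDiff_pi.1 hG
    have hGc : ∀ i, HasCompactSupport
        (fun y => (cross3 (cross3 (V t y) (Bm t y)) (A t y) - φ t y • Bm t y) i) := fun i =>
      HasCompactSupport.intro hK fun x hx => by
        rw [hAsupp t x hx, hBmsupp t x hx]
        fin_cases i <;> simp [cross3]
    have hz : ∫ x, deriv (fun τ => dot3 (A τ x) (Bm τ x)) t = 0 := by
      simp only [hd]
      unfold div3
      rw [integral_finsetSum _ fun i _ => aux_integrable_pd3 i _ (hGi i) (hGc i)]
      exact Finset.sum_eq_zero fun i _ => aux_integral_pd3 i _ (hGi i) (hGc i)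
    rwa [hz] at h
  intro t₁ t₂
  exact is_const_of_deriv_eq_zero (fun t => (hzero t).differentiableAt)
    (fun t => (hzero t).deriv) t₁ t₂
end

section
/- Let ρ, h : ℝ × ℝ³ → ℝ and V, B : ℝ × ℝ³ → ℝ³ be smooth with ρ(t,x) > 0 for all (t,x), and suppose there is a compact set K ⊆ ℝ³ such that V(t,·) and B(t,·) vanish outside K for every t. Assume that for all (t,x) the barotropic MHD equations hold: ∂ₜV = −(∇×V)×V − ∇(h + |V|²/2) + ρ⁻¹((∇×B)×B), ∂ₜB = ∇×(V×B), and ∇·B = 0. Then the cross helicity t ↦ ∫_{ℝ³} V(t,x)·B(t,x) dx is constant in t. -/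
open MeasureTheory

lemma pd3_mul' {f g : (Fin 3 → ℝ) → ℝ} {x : Fin 3 → ℝ} (i : Fin 3)
    (hf : DifferentiableAt ℝ f x) (hg : DifferentiableAt ℝ g x) :
    pd3 i (fun y => f y * g y) x = f x * pd3 i g x + pd3 i f x * g x := by
  unfold pd3
  rw [fderiv_fun_mul hf hg]
  simp [mul_comm]

lemma pd3_sub' {f g : (Fin 3 → ℝ) → ℝ} {x : Fin 3 → ℝ} (i : Fin 3)
    (hf : DifferentiableAt ℝ f x) (hg : DifferentiableAt ℝ g x) :
    pd3 i (fun y => f y - g y) x = pd3 i f x - pd3 i g x := by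
  unfold pd3
  rw [fderiv_fun_sub hf hg]
  simp

lemma integral_pd3 (i : Fin 3) {f : (Fin 3 → ℝ) → ℝ} (hf : ContDiff ℝ 1 f)
    (hc : HasCompactSupport f) :
    Integrable (pd3 i f) ∧ ∫ x, pd3 i f x = 0 := by
  have hcont : Continuous (pd3 i f) := (hf.continuous_fderiv (by norm_num)).clm_apply continuous_const
  have hcs : HasCompactSupport (pd3 i f) := hc.fderiv_apply (𝕜 := ℝ) (Pi.single i 1)
  have hi : Integrable (pd3 i f) := hcont.integrable_of_hasCompactSupport hcs
  refine ⟨hi, ?_⟩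
  have := integral_mul_fderiv_eq_neg_fderiv_mul_of_integrable (𝕜 := ℝ) (μ := volume)
    (f := fun _ : Fin 3 → ℝ => (1 : ℝ)) (g := f) (v := Pi.single i 1)
    (by simp) (by simp only [one_mul]; exact hi)
    (by simpa using hf.continuous.integrable_of_hasCompactSupport hc)
    (fun _ _ => by fun_prop) (fun x _ => hf.differentiable (by norm_num) x)
  simpa [pd3] using this

lemma integral_div3 {F : (Fin 3 → ℝ) → (Fin 3 → ℝ)} (hF : ContDiff ℝ 1 F)
    {K : Set (Fin 3 → ℝ)} (hK : IsCompact K) (hs : ∀ x, x ∉ K → F x = 0) :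
    ∫ x, div3 F x = 0 := by
  have h : ∀ i, Integrable (pd3 i (fun y => F y i)) ∧ ∫ x, pd3 i (fun y => F y i) x = 0 := by
    intro i
    apply integral_pd3 i (contDiff_pi.1 hF i)
    exact HasCompactSupport.intro hK (fun x hx => by simp [hs x hx])
  unfold div3
  rw [integral_finsetSum _ (fun i _ => (h i).1)]
  simp [(h _).2]

lemma pointwise_div {v b : (Fin 3 → ℝ) → (Fin 3 → ℝ)} {φ : (Fin 3 → ℝ) → ℝ} {x : Fin 3 → ℝ} (r : ℝ)
    (hv : DifferentiableAt ℝ v x) (hb : DifferentiableAt ℝ b x) (hφ : DifferentiableAt ℝ φ x)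
    (hdiv : div3 b x = 0) :
    dot3 (-cross3 (curl3 v x) (v x) - grad3 φ x + r • cross3 (curl3 b x) (b x)) (b x)
      + dot3 (v x) (curl3 (fun y => cross3 (v y) (b y)) x)
    = div3 (fun y => cross3 (cross3 (v y) (b y)) (v y) - φ y • b y) x := by
  have hv' : ∀ i, DifferentiableAt ℝ (fun y => v y i) x := differentiableAt_pi.1 hv
  have hb' : ∀ i, DifferentiableAt ℝ (fun y => b y i) x := differentiableAt_pi.1 hb
  have hv0 := hv' 0
  have hv1 := hv' 1
  have hv2 := hv' 2
  have hb0 := hb' 0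
  have hb1 := hb' 1
  have hb2 := hb' 2
  simp only [div3, Fin.sum_univ_three] at hdiv
  simp (disch := fun_prop) only [div3, dot3, cross3, curl3, grad3, Fin.sum_univ_three, Pi.add_apply,
    Pi.sub_apply, Pi.neg_apply, Pi.smul_apply, smul_eq_mul, Matrix.cons_val, pd3_mul', pd3_sub']
  linear_combination (φ x) * hdiv

lemma hasDerivAt_integral_cs {F : ℝ → (Fin 3 → ℝ) → ℝ}
    (hF : ContDiff ℝ 1 (fun p : ℝ × (Fin 3 → ℝ) => F p.1 p.2))
    {K : Set (Fin 3 → ℝ)} (hK : IsCompact K) (hs : ∀ t x, x ∉ K → F t x = 0) (t : ℝ) :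
    HasDerivAt (fun s => ∫ x, F s x) (∫ x, deriv (fun s => F s x) t) t := by
  set G : ℝ → (Fin 3 → ℝ) → ℝ := fun s x =>
    fderiv ℝ (fun p : ℝ × (Fin 3 → ℝ) => F p.1 p.2) (s, x) (1, 0) with hG
  have hd : ∀ s x, HasDerivAt (fun s => F s x) (G s x) s := by
    intro s x
    have h1 := (hF.differentiable (by norm_num) (s, x)).hasFDerivAt
    have h2 : HasDerivAt (fun s : ℝ => (s, x)) ((1 : ℝ), (0 : Fin 3 → ℝ)) s :=
      (hasDerivAt_id s).prodMk (hasDerivAt_const s x)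
    exact h1.comp_hasDerivAt s h2
  have hGc : Continuous (fun p : ℝ × (Fin 3 → ℝ) => G p.1 p.2) :=
    (hF.continuous_fderiv (by norm_num)).clm_apply continuous_const
  have hGs : ∀ s x, x ∉ K → G s x = 0 := by
    intro s x hx
    have : (fun s => F s x) = fun _ => 0 := by
      funext s
      exact hs s x hx
    rw [← (hd s x).deriv, this]
    simp
  obtain ⟨C, hC⟩ := ((isCompact_Icc (a := t - 1) (b := t + 1)).prod hK).exists_bound_of_continuousOn
    hGc.continuousOn
  have hFc : ∀ s, Continuous (F s) := fun s =>
    hF.continuous.comp (Continuous.prodMk continuous_const continuous_id)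
  have hGc' : ∀ s, Continuous (G s) := fun s =>
    hGc.comp (Continuous.prodMk continuous_const continuous_id)
  have key := hasDerivAt_integral_of_dominated_loc_of_deriv_le (μ := volume) (F := F) (F' := G)
    (x₀ := t) (s := Set.Icc (t - 1) (t + 1)) (bound := K.indicator fun _ => C)
    (Icc_mem_nhds (by linarith) (by linarith))
    (Filter.Eventually.of_forall fun s => (hFc s).aestronglyMeasurable)
    ((hFc t).integrable_of_hasCompactSupport (HasCompactSupport.intro hK (hs t)))
    (hGc' t).aestronglyMeasurable
    (Filter.Eventually.of_forall fun x s hsI => by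
      by_cases hx : x ∈ K
      · simpa [hx] using hC (s, x) ⟨hsI, hx⟩
      · simp [hx, hGs s x hx])
    ((integrable_indicator_iff hK.measurableSet).2 (integrableOn_const hK.measure_lt_top.ne))
    (Filter.Eventually.of_forall fun x s _ => hd s x)
  have h3 : (fun x => deriv (fun s => F s x) t) = G t := by
    funext x
    exact (hd t x).deriv
  rw [h3]
  exact key.2

/-- Conservation of the cross helicity `C₃ = ∫ V·B` for the ideal
barotropic MHD equations with spatially compactly supported fields. -/
theorem MHD_cross_helicity_constant
    (ρ h : ℝ → (Fin 3 → ℝ) → ℝ)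
    (V B : ℝ → (Fin 3 → ℝ) → (Fin 3 → ℝ))
    (hρ : ContDiff ℝ (⊤ : ℕ∞) (fun p : ℝ × (Fin 3 → ℝ) => ρ p.1 p.2))
    (hh : ContDiff ℝ (⊤ : ℕ∞) (fun p : ℝ × (Fin 3 → ℝ) => h p.1 p.2))
    (hV : ContDiff ℝ (⊤ : ℕ∞) (fun p : ℝ × (Fin 3 → ℝ) => V p.1 p.2))
    (hB : ContDiff ℝ (⊤ : ℕ∞) (fun p : ℝ × (Fin 3 → ℝ) => B p.1 p.2))
    (hρpos : ∀ t x, 0 < ρ t x)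
    (K : Set (Fin 3 → ℝ)) (hK : IsCompact K)
    (hVsupp : ∀ t x, x ∉ K → V t x = 0)
    (hBsupp : ∀ t x, x ∉ K → B t x = 0)
    (hmom : ∀ t x, deriv (fun τ => V τ x) t =
      -cross3 (curl3 (V t) x) (V t x)
        - grad3 (fun y => h t y + dot3 (V t y) (V t y) / 2) x
        + (ρ t x)⁻¹ • cross3 (curl3 (B t) x) (B t x))
    (hind : ∀ t x, deriv (fun τ => B τ x) t =
      curl3 (fun y => cross3 (V t y) (B t y)) x)
    (hdivB : ∀ t x, div3 (B t) x = 0) :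
    ∀ t₁ t₂ : ℝ,
      (∫ x : Fin 3 → ℝ, dot3 (V t₁ x) (B t₁ x)) =
        ∫ x : Fin 3 → ℝ, dot3 (V t₂ x) (B t₂ x) := by
  have hVs : ∀ t, ContDiff ℝ (⊤ : ℕ∞) (V t) := fun t =>
    hV.comp (contDiff_prodMk_right t)
  have hBs : ∀ t, ContDiff ℝ (⊤ : ℕ∞) (B t) := fun t =>
    hB.comp (contDiff_prodMk_right t)
  have hhs : ∀ t, ContDiff ℝ (⊤ : ℕ∞) (h t) := fun t =>
    hh.comp (contDiff_prodMk_right t)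
  have hVi : ∀ t i, ContDiff ℝ (⊤ : ℕ∞) (fun x => V t x i) := fun t => contDiff_pi.1 (hVs t)
  have hBi : ∀ t i, ContDiff ℝ (⊤ : ℕ∞) (fun x => B t x i) := fun t => contDiff_pi.1 (hBs t)
  have hφ : ∀ t, ContDiff ℝ (⊤ : ℕ∞) (fun y => h t y + dot3 (V t y) (V t y) / 2) := by
    intro t
    unfold dot3
    exact (hhs t).add ((ContDiff.sum fun i _ => (hVi t i).mul (hVi t i)).div_const 2)
  have hF : ContDiff ℝ 1 (fun p : ℝ × (Fin 3 → ℝ) => dot3 (V p.1 p.2) (B p.1 p.2)) := by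
    unfold dot3
    exact (ContDiff.sum fun i _ => (contDiff_pi.1 hV i).mul (contDiff_pi.1 hB i)).of_le
      (by exact_mod_cast le_top)
  have hder := hasDerivAt_integral_cs (F := fun t x => dot3 (V t x) (B t x)) hF hK
    (fun t x hx => by simp [dot3, hBsupp t x hx])
  have hpt : ∀ t x, deriv (fun s => dot3 (V s x) (B s x)) t =
      div3 (fun y => cross3 (cross3 (V t y) (B t y)) (V t y)
        - (h t y + dot3 (V t y) (V t y) / 2) • B t y) x := by
    intro t x
    have hl : ContDiff ℝ (⊤ : ℕ∞) (fun s : ℝ => (s, x)) := contDiff_prodMk_left x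
    have hVt : DifferentiableAt ℝ (fun s => V s x) t :=
      (hV.comp hl).differentiable (by simp) t
    have hBt : DifferentiableAt ℝ (fun s => B s x) t :=
      (hB.comp hl).differentiable (by simp) t
    rw [← pointwise_div (φ := fun y => h t y + dot3 (V t y) (V t y) / 2) (ρ t x)⁻¹
      ((hVs t).differentiable (by simp) x) ((hBs t).differentiable (by simp) x)
      ((hφ t).differentiable (by simp) x) (hdivB t x), ← hmom, ← hind]
    have hVd := hasDerivAt_pi.1 hVt.hasDerivAt
    have hBd := hasDerivAt_pi.1 hBt.hasDerivAt
    unfold dot3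
    rw [← Finset.sum_add_distrib]
    exact (HasDerivAt.fun_sum fun i _ => (hVd i).mul (hBd i)).deriv
  have hzero : ∀ t, ∫ x, deriv (fun s => dot3 (V s x) (B s x)) t = 0 := by
    intro t
    simp_rw [hpt t]
    refine integral_div3 ?_ hK ?_
    · refine ContDiff.of_le (n := ((⊤ : ℕ∞) : WithTop ℕ∞)) ?_ (by exact_mod_cast le_top)
      refine ContDiff.sub ?_ ((hφ t).smul (hBs t))
      have a0 := hVi t 0
      have a1 := hVi t 1
      have a2 := hVi t 2
      have b0 := hBi t 0
      have b1 := hBi t 1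
      have b2 := hBi t 2
      rw [contDiff_pi]
      intro i
      fin_cases i <;> simp only [cross3, Matrix.cons_val] <;> simp <;> fun_prop
    · intro x hx
      ext i
      fin_cases i <;> simp [cross3, hBsupp t x hx, hVsupp t x hx]
  intro t₁ t₂
  exact is_const_of_deriv_eq_zero (f := fun t => ∫ x, dot3 (V t x) (B t x))
    (fun t => (hder t).differentiableAt) (fun t => (hder t).deriv.trans (hzero t)) t₁ t₂
end
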